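/- arXiv:2311.02388 — 2 statements merged into one kernel-verified Lean document; each statement's English description precedes it below -/
import Mathlib

section
/- For all natural numbers p, q with p < q < 2p − ⌊|p−2|/2⌋ (an inequality of integers), and for all natural numbers p' ≤ p−1 and q' ≤ q−1, one has f(p',q') ⊕ f(p−1−p', q−1−q') ≠ F(p,q). -/
/-!
The nimbers have a closed form: `f p p = 1`, and for `p ≠ q`
`f p q = 2 * min p q ⌊2 (p + q - 1) / 5⌋`, except that `f 1 2 = f 2 1 = 2`; this is `g` below.
It is proved (`f_eq_g`) by induction on `p`, reducing to `p < q` by symmetry.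

An option of `(p, q)` is a pair `(a, b)`, `(c, d)` with `a + c + 1 = p` and `b + d + 1 = q`.
Since `p ≠ q`, at most one of the two pairs is on the diagonal. If exactly one is, the option has an
odd value. If none is, its value is `2 * (x ^^^ y)`, and `x ^^^ y ≤ x + y` is too small to equal
either `p` or `⌊2 (p + q - 1) / 5⌋`, because the bounds on `x` and `y` add up to strictly less
(`option_ne_floor`, `option_ne_left`). This excludes the value `g p q`, and since
`F p q = 2 * ⌊2 (p + q - 1) / 5⌋`, it is also the final claim once `f = g` is known.

All smaller values do occur (`exists_odd`, `exists_even`): the odd ones as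
`g a a ^^^ g c (c + (q - p))`, and the even ones mostly as `g 0 b ^^^ g (p - 1) d = g (p - 1) d`,
with a few residue classes at the top of the range obtained from options in which one pair is
`(1, 2)`, `(2, 1)` or `(2, 4)`.
-/

/-- `mex S` is the least natural number not belonging to `S`. -/
noncomputable def mex (S : Set ℕ) : ℕ := sInf {n : ℕ | n ∉ S}

/-- `h 0 = 0` and `h n = 1` for all `n ≥ 1`. -/
def h : ℕ → ℕ
  | 0 => 0
  | _ + 1 => 1

/-- The nimber of the Circular sprout game `CS₄(𝒫₄ : p,1,q,1)`, defined by strong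
recursion: `f p q` is the mex of the set consisting of `h p ^^^ h q` together with all
values `f p' q' ^^^ f (p-1-p') (q-1-q')` for `0 ≤ p' ≤ p-1` and `0 ≤ q' ≤ q-1`. -/
noncomputable def f (p q : ℕ) : ℕ :=
  mex ({h p ^^^ h q} ∪
    ⋃ (p' : ℕ) (_ : p' < p) (q' : ℕ) (_ : q' < q),
      {f p' q' ^^^ f (p - 1 - p') (q - 1 - q')})
termination_by p
decreasing_by
  · omega
  · omega

/-- `idx p q` is the unique element of `{1,2,3,4,5}` congruent to `p + q` modulo `5`. -/
def idx (p q : ℕ) : ℕ := if (p + q) % 5 = 0 then 5 else (p + q) % 5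

/-- `F p q = (4/5)·(p + q − idx p q) + 2·⌊idx p q / 4⌋`. -/
def F (p q : ℕ) : ℕ := 4 * ((p + q - idx p q) / 5) + 2 * (idx p q / 4)

/-- Half of the off-diagonal nimber. The pairs with sum `3` are separated because
`(1, 2)` is the one exception to the floor formula. -/
def half (p q : ℕ) : ℕ :=
  if p + q = 3 then min p q else min (min p q) (2 * (p + q - 1) / 5)

/-- Closed form of the nimber `f p q`. -/
def g (p q : ℕ) : ℕ := if p = q then 1 else 2 * half p q

lemma half_comm (p q : ℕ) : half p q = half q p := by
  unfold half
  rw [Nat.add_comm, min_comm]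

lemma g_comm (p q : ℕ) : g p q = g q p := by
  unfold g
  rw [half_comm]
  simp only [eq_comm]

lemma two_mul_xor (x y : ℕ) : (2 * x) ^^^ (2 * y) = 2 * (x ^^^ y) := by
  have h1 : (2 * x ^^^ 2 * y) / 2 = 2 * x / 2 ^^^ 2 * y / 2 := Nat.xor_div_two
  have h2 : (2 * x ^^^ 2 * y) % 2 = (2 * x + 2 * y) % 2 := Nat.xor_mod_two_eq
  rw [Nat.mul_div_cancel_left x two_pos, Nat.mul_div_cancel_left y two_pos] at h1
  omega

lemma one_xor_two_mul (x : ℕ) : 1 ^^^ (2 * x) = 2 * x + 1 := by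
  have := @Nat.xor_one_of_even (2 * x) ⟨x, by omega⟩
  rw [Nat.xor_comm, this]

lemma xor_le_sum (x y : ℕ) : x ^^^ y ≤ x + y := by
  induction x using Nat.strong_induction_on generalizing y with
  | _ x ih =>
    rcases Nat.eq_zero_or_pos x with rfl | hx
    · simp
    · have h1 := ih (x / 2) (by omega) (y / 2)
      have h2 : (x ^^^ y) / 2 = x / 2 ^^^ y / 2 := Nat.xor_div_two
      have h3 : (x ^^^ y) % 2 = (x + y) % 2 := Nat.xor_mod_two_eq
      omega

lemma mex_eq_of (S : Set ℕ) (n : ℕ) (hn : n ∉ S) (hlt : ∀ k < n, k ∈ S) : mex S = n := by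
  unfold mex
  apply le_antisymm
  · exact Nat.sInf_le hn
  · by_contra! hc
    exact Nat.sInf_mem (s := {n : ℕ | n ∉ S}) ⟨n, hn⟩ (hlt _ hc)

/-- The defining recursion with an option written as two pairs with `a + c + 1 = p` and
`b + d + 1 = q`, which avoids truncated subtraction. -/
lemma f_eq (p q : ℕ) : f p q = mex ({h p ^^^ h q} ∪
    {v | ∃ a b c d, a + c + 1 = p ∧ b + d + 1 = q ∧ v = f a b ^^^ f c d}) := by
  rw [f]
  congr 2
  ext v
  simp only [Set.mem_iUnion, Set.mem_singleton_iff, Set.mem_ofPred_eq, exists_prop]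
  constructor
  · rintro ⟨a, ha, b, hb, rfl⟩
    exact ⟨a, b, p - 1 - a, q - 1 - b, by omega, by omega, rfl⟩
  · rintro ⟨a, b, c, d, rfl, rfl, rfl⟩
    refine ⟨a, by omega, b, by omega, ?_⟩
    congr 2 <;> omega

lemma f_comm (p q : ℕ) : f p q = f q p := by
  induction p using Nat.strong_induction_on generalizing q with
  | _ p ih =>
    rw [f_eq p q, f_eq q p, Nat.xor_comm]
    congr 2
    ext v
    constructor
    · rintro ⟨a, b, c, d, h1, h2, rfl⟩
      exact ⟨b, a, d, c, h2, h1, by rw [ih a (by omega), ih c (by omega)]⟩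
    · rintro ⟨a, b, c, d, h1, h2, rfl⟩
      exact ⟨b, a, d, c, h2, h1, by rw [← ih b (by omega), ← ih d (by omega)]⟩

/-- An option of an off-diagonal position has an even value only if both pairs are off the
diagonal, and then its half is the Nim-sum of the halves. -/
lemma option_even {p q a b c d n : ℕ} (hpq : p ≠ q) (h1 : a + c + 1 = p) (h2 : b + d + 1 = q)
    (he : g a b ^^^ g c d = 2 * n) : a ≠ b ∧ c ≠ d ∧ half a b ^^^ half c d = n := by
  unfold g at he
  split_ifs at he with hab hcd hcd
  · omega
  · rw [one_xor_two_mul] at he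
    omega
  · rw [Nat.xor_comm, one_xor_two_mul] at he
    omega
  · rw [two_mul_xor] at he
    exact ⟨hab, hcd, by omega⟩

lemma option_ne_floor {p q a b c d : ℕ} (hpq : p ≠ q)
    (h1 : a + c + 1 = p) (h2 : b + d + 1 = q) :
    g a b ^^^ g c d ≠ 2 * (2 * (p + q - 1) / 5) := by
  intro he
  obtain ⟨hab, hcd, hx⟩ := option_even hpq h1 h2 he
  -- Equal halves are separated to cover two exceptional pairs, where `x + y` is too large.
  by_cases hh : half a b = half c d
  · rw [hh, Nat.xor_self] at hx
    omega
  · have := xor_le_sum (half a b) (half c d)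
    unfold half at *
    split_ifs at * <;> omega

lemma option_ne_left {p q a b c d : ℕ} (hpq : p ≠ q)
    (h1 : a + c + 1 = p) (h2 : b + d + 1 = q) :
    g a b ^^^ g c d ≠ 2 * p := by
  intro he
  obtain ⟨hab, hcd, hx⟩ := option_even hpq h1 h2 he
  have := xor_le_sum (half a b) (half c d)
  unfold half at *
  split_ifs at * <;> omega

lemma option_ne_g {p q a b c d : ℕ} (hpq : p < q)
    (h1 : a + c + 1 = p) (h2 : b + d + 1 = q) :
    g a b ^^^ g c d ≠ g p q := by
  have e1 := option_ne_left hpq.ne h1 h2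
  by_cases hs : p + q = 3
  · have : g p q = 2 * p := by
      rw [g, half, if_neg hpq.ne, if_pos hs]
      omega
    rwa [this]
  · have e2 := option_ne_floor hpq.ne h1 h2
    have : g p q = 2 * p ∨ g p q = 2 * (2 * (p + q - 1) / 5) := by
      rw [g, half, if_neg hpq.ne, if_neg hs]
      omega
    rcases this with h | h <;> rwa [h]

/-- Along a fixed off-diagonal, `half` increases from `0` by steps of at most `1`, so that
no value below `half p q` is skipped. -/
lemma exists_odd {p q k : ℕ} (hpq : p < q) (hk : k < half p q) :
    ∃ a b c d, a + c + 1 = p ∧ b + d + 1 = q ∧ 2 * k + 1 = g a b ^^^ g c d := by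
  obtain ⟨c, hc, hck⟩ : ∃ c < p, half c (c + (q - p)) = k := by
    by_cases hks : k + 2 ≤ 2 * (q - p)
    · -- Here the minimum in `half` is its first argument.
      refine ⟨k, ?_, ?_⟩
      · unfold half at hk
        split_ifs at hk <;> omega
      · unfold half
        split_ifs <;> omega
    · -- The least `c` with `5 * k ≤ 2 * (2 * c + (q - p) - 1)`.
      refine ⟨(5 * k + 5 - 2 * (q - p)) / 4, ?_, ?_⟩
      · unfold half at hk
        split_ifs at hk <;> omega
      · unfold half at *
        split_ifs at * <;> omega
  refine ⟨p - 1 - c, p - 1 - c, c, c + (q - p), by omega, by omega, ?_⟩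
  have h1 : g (p - 1 - c) (p - 1 - c) = 1 := by simp [g]
  have h2 : g c (c + (q - p)) = 2 * k := by rw [g, if_neg (by omega), hck]
  rw [h1, h2, one_xor_two_mul]

/-- Options `(0, b)`, `(p - 1, d)` realise every value of `g (p - 1) d` with `d ≤ q - 2`. -/
lemma exists_even_of_half {p q d k : ℕ} (hp : 0 < p) (hd : d + 2 ≤ q) (hne : d ≠ p - 1)
    (hk : half (p - 1) d = k) :
    ∃ a b c d, a + c + 1 = p ∧ b + d + 1 = q ∧ 2 * k = g a b ^^^ g c d := by
  refine ⟨0, q - 1 - d, p - 1, d, by omega, by omega, ?_⟩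
  have h1 : g 0 (q - 1 - d) = 0 := by
    rw [g, if_neg (by omega), half]
    split_ifs <;> omega
  have h2 : g (p - 1) d = 2 * k := by rw [g, if_neg (by omega), hk]
  rw [h1, h2, Nat.zero_xor]

lemma exists_even_of_xor {p q a b c d x y k : ℕ} (h1 : a + c + 1 = p) (h2 : b + d + 1 = q)
    (hab : a ≠ b) (hcd : c ≠ d) (hx : half a b = x) (hy : half c d = y) (hk : x ^^^ y = k) :
    ∃ a b c d, a + c + 1 = p ∧ b + d + 1 = q ∧ 2 * k = g a b ^^^ g c d := by
  refine ⟨a, b, c, d, h1, h2, ?_⟩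
  rw [g, g, if_neg hab, if_neg hcd, hx, hy, two_mul_xor, hk]

lemma exists_even {p q k : ℕ} (hpq : p < q) (hk : k < half p q) (hk0 : 0 < k) :
    ∃ a b c d, a + c + 1 = p ∧ b + d + 1 = q ∧ 2 * k = g a b ^^^ g c d := by
  have hkp : k < p := by
    unfold half at hk
    split_ifs at hk <;> omega
  have hkf : 5 * k + 7 ≤ 2 * (p + q) := by
    unfold half at hk
    split_ifs at hk <;> omega
  by_cases hsmall : 3 * k + 4 ≤ 2 * p
  · -- Here the minimum in `half (p - 1) d` is `d`.
    refine exists_even_of_half (d := k) (by omega) (by omega) (by omega) ?_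
    unfold half
    split_ifs <;> omega
  by_cases hq1 : q = p + 1
  · subst hq1
    by_cases hle : 5 * k + 8 ≤ 4 * p
    · -- The least `d` with `5 * k ≤ 2 * (p + d - 2)`.
      refine exists_even_of_half (d := (5 * k + 5 - 2 * p) / 2) (by omega) (by omega)
        (by omega) ?_
      unfold half
      split_ifs <;> omega
    · by_cases h4 : p % 5 = 4
      · obtain ⟨u, rfl⟩ : ∃ u, p = 5 * u + 4 := ⟨p / 5, by omega⟩
        refine exists_even_of_xor (a := 2) (b := 4) (c := 5 * u + 1) (d := 5 * u)
          (x := 2) (y := 2 * (2 * u)) (by omega) (by omega) (by omega) (by omega) (by rfl)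
          ?_ ?_
        · unfold half
          split_ifs <;> omega
        · have h1 := two_mul_xor 1 (2 * u)
          rw [one_xor_two_mul, Nat.mul_one] at h1
          rw [h1]
          omega
      · -- The bounds on `5 * k` leave `p = 5 * u`, `k = 4 * u - 1` and `p = 5 * u + 3`,
        -- `k = 4 * u + 1`.
        have hkc : (p % 5 = 0 ∧ k + 1 = 4 * (p / 5)) ∨ (p % 5 = 3 ∧ k = 4 * (p / 5) + 1) := by
          have h5 : p % 5 < 5 := Nat.mod_lt _ (by norm_num)
          interval_cases hr : p % 5 <;> omega
        refine exists_even_of_xor (a := 2) (b := 1) (c := p - 3) (d := p - 1)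
          (x := 1) (y := 2 * (k / 2)) (by omega) (by omega) (by omega) (by omega) (by rfl)
          ?_ ?_
        · unfold half
          split_ifs <;> omega
        · rw [one_xor_two_mul]
          omega
  · by_cases hle : 5 * k + 8 ≤ 2 * (p + q)
    · -- The least admissible `d` is `(5 * k + 5 - 2 * p) / 2`; if it falls on the diagonal,
      -- the next one still gives the same floor.
      by_cases hd : (5 * k + 5 - 2 * p) / 2 = p - 1
      · refine exists_even_of_half (d := p) (by omega) (by omega) (by omega) ?_
        unfold half
        split_ifs <;> omega
      · refine exists_even_of_half (d := (5 * k + 5 - 2 * p) / 2) (by omega) (by omega)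
          hd ?_
        unfold half
        split_ifs <;> omega
    · -- Now `5 * k + 7 = 2 * (p + q)`, so `k` is odd.
      refine exists_even_of_xor (a := 1) (b := 2) (c := p - 2) (d := q - 3)
        (x := 1) (y := 2 * (k / 2)) (by omega) (by omega) (by omega) (by omega) (by rfl)
        ?_ ?_
      · unfold half
        split_ifs <;> omega
      · rw [one_xor_two_mul]
        omega

lemma h_pos {n : ℕ} (hn : 0 < n) : h n = 1 := by
  obtain ⟨m, rfl⟩ : ∃ m, n = m + 1 := ⟨n - 1, by omega⟩
  rfl

theorem f_eq_g (p q : ℕ) : f p q = g p q := by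
  induction p using Nat.strong_induction_on generalizing q with
  | _ p ih =>
    rcases lt_trichotomy p q with hpq | rfl | hpq
    · rw [f_eq]
      have hset : {v | ∃ a b c d, a + c + 1 = p ∧ b + d + 1 = q ∧ v = f a b ^^^ f c d} =
          {v | ∃ a b c d, a + c + 1 = p ∧ b + d + 1 = q ∧ v = g a b ^^^ g c d} := by
        ext v
        constructor <;> rintro ⟨a, b, c, d, h1, h2, rfl⟩ <;>
          exact ⟨a, b, c, d, h1, h2, by rw [ih a (by omega), ih c (by omega)]⟩
      rw [hset]
      have hg : g p q = 2 * half p q := by rw [g, if_neg hpq.ne]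
      rcases Nat.eq_zero_or_pos p with rfl | hp
      · have h0 : half 0 q = 0 := by
          unfold half
          split_ifs <;> omega
        rw [hg, h0]
        apply mex_eq_of
        · rintro (hv | ⟨a, b, c, d, h1, -⟩)
          · rw [h_pos hpq] at hv
            simp [h] at hv
          · omega
        · intro k hk
          omega
      · rw [h_pos hp, h_pos (hp.trans hpq), Nat.xor_self]
        have hpos : 0 < half p q := by
          unfold half
          split_ifs <;> omega
        apply mex_eq_of
        · rintro (hv | ⟨a, b, c, d, h1, h2, he⟩)
          · have : g p q = 0 := hv
            omega
          · exact option_ne_g hpq h1 h2 he.symm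
        · intro k hk
          rw [hg] at hk
          rcases Nat.even_or_odd' k with ⟨j, rfl | rfl⟩
          · rcases Nat.eq_zero_or_pos j with rfl | hj
            · exact Or.inl rfl
            · exact Or.inr (exists_even hpq (by omega) hj)
          · exact Or.inr (exists_odd hpq (by omega))
    · rw [f_eq]
      have hg : g p p = 1 := by simp [g]
      rw [hg, Nat.xor_self]
      apply mex_eq_of
      · rintro (hv | ⟨a, b, c, d, h1, h2, he⟩)
        · exact absurd hv (by simp)
        · rw [ih a (by omega), ih c (by omega)] at he
          by_cases hab : a = b
          · have hcd : c = d := by omega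
            simp [g, hab, hcd] at he
          · have hcd : c ≠ d := by omega
            rw [g, g, if_neg hab, if_neg hcd, two_mul_xor] at he
            omega
      · intro k hk
        obtain rfl : k = 0 := by omega
        exact Or.inl rfl
    · rw [f_comm, ih q hpq, g_comm]

lemma F_eq (p q : ℕ) (hs : 0 < p + q) : F p q = 2 * (2 * (p + q - 1) / 5) := by
  unfold F idx
  have h5 : (p + q) % 5 < 5 := Nat.mod_lt _ (by norm_num)
  interval_cases hr : (p + q) % 5 <;> simp <;> omega

theorem stmt7 (p q : ℕ) (hpq : p < q)
    (hq : (q : ℤ) < 2 * (p : ℤ) - |(p : ℤ) - 2| / 2)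
    (p' q' : ℕ) (hp' : p' ≤ p - 1) (hq' : q' ≤ q - 1) :
    f p' q' ^^^ f (p - 1 - p') (q - 1 - q') ≠ F p q := by
  -- For `p ≤ 1` the range of `q` is empty, so truncation in `p - 1` is harmless.
  have hp2 : 2 ≤ p := by
    by_contra! hc
    interval_cases p <;> norm_num at hq <;> omega
  rw [f_eq_g, f_eq_g, F_eq p q (by omega)]
  exact option_ne_floor hpq.ne (by omega) (by omega)
end

section
/- For all natural numbers p, q with p < q < 2p − ⌊|p−2|/2⌋ (an inequality of integers), and for every even natural number l with 2 ≤ l ≤ F(p,q) − 2, there exist natural numbers p' ≤ p−1 and q' ≤ q−1 such that f(p',q') ⊕ f(p−1−p', q−1−q') = l. -/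
/-- Half of the value of `f` at an off-diagonal position. -/
def M (p q : ℕ) : ℕ :=
  if (p = 1 ∧ q = 2) ∨ (p = 2 ∧ q = 1) then 1 else min (min p q) (2 * (p + q - 1) / 5)

/-- The closed form of `f`. -/
def G (p q : ℕ) : ℕ := if p = q then 1 else 2 * M p q

/-- `x` is the Nim-sum of the closed-form values of the two components of a splitting move from
`(p, q)`. -/
def IsOption (p q x : ℕ) : Prop :=
  ∃ a < p, ∃ b < q, G a b ^^^ G (p - 1 - a) (q - 1 - b) = x

lemma M_comm (p q : ℕ) : M p q = M q p := by
  unfold M; split_ifs <;> omega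

lemma G_comm (p q : ℕ) : G p q = G q p := by
  unfold G; rw [M_comm]; split_ifs <;> omega

/-- Upper bounds for `M` away from the diagonal, separating the exceptional positions. -/
lemma M_upper {a b : ℕ} (hab : a ≠ b) :
    (M a b = 1 ∧ a + b = 3 ∧ 1 ≤ a ∧ 1 ≤ b) ∨
      (M a b ≤ a ∧ M a b ≤ b ∧ 5 * M a b + 2 ≤ 2 * (a + b)) := by
  unfold M; split_ifs <;> omega

lemma M_lower {p q m : ℕ} (hp : m ≤ p) (hq : m ≤ q) (hm : 5 * m + 2 ≤ 2 * (p + q)) :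
    m ≤ M p q := by
  unfold M; split_ifs <;> omega

lemma IsOption.symm {p q x : ℕ} (hx : IsOption p q x) : IsOption q p x := by
  obtain ⟨a, ha, b, hb, e⟩ := hx
  exact ⟨b, hb, a, ha, by rw [G_comm b, G_comm (q - 1 - b)]; exact e⟩

lemma two_mul_xor_s9 (a b : ℕ) : (2 * a) ^^^ (2 * b) = 2 * (a ^^^ b) := by
  have := Nat.shiftLeft_xor_distrib (a := a) (b := b) (i := 1)
  simp only [Nat.shiftLeft_eq, pow_one] at this
  rw [mul_comm 2 a, mul_comm 2 b, mul_comm 2 (a ^^^ b)]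
  exact this.symm

lemma two_mul_xor_one (a : ℕ) : (2 * a) ^^^ 1 = 2 * a + 1 :=
  Nat.xor_one_of_even (even_two_mul a)

lemma xor_le_add' (a b : ℕ) : a ^^^ b ≤ a + b := by
  induction a using Nat.strong_induction_on generalizing b with
  | _ a ih =>
    rcases Nat.eq_zero_or_pos a with rfl | ha
    · simp
    · have h1 := ih (a / 2) (by omega) (b / 2)
      have h2 : (a ^^^ b) / 2 = a / 2 ^^^ b / 2 := Nat.xor_div_two
      have h3 : (a ^^^ b) % 2 = (a + b) % 2 := Nat.xor_mod_two_eq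
      omega

/-- Discrete intermediate value theorem along a diagonal. -/
lemma exists_M_diag (p : ℕ) : ∀ q, p < q → ∀ t ≤ M p q, ∃ a ≤ p, M (p - a) (q - a) = t := by
  induction p with
  | zero =>
    intro q hq t ht
    refine ⟨0, le_rfl, ?_⟩
    simp [M] at ht ⊢
    omega
  | succ p ih =>
    intro q hq t ht
    rcases ht.eq_or_lt with rfl | ht
    · exact ⟨0, by omega, rfl⟩
    · obtain ⟨a, ha, e⟩ := ih (q - 1) (by omega) t (by
        unfold M at ht ⊢; split_ifs at ht ⊢ <;> omega)
      refine ⟨a + 1, by omega, ?_⟩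
      rw [← e]
      congr 1 <;> omega

/-- Discrete intermediate value theorem along a column. -/
lemma exists_M_col (q p : ℕ) (hp : p < q) : ∀ t ≤ M p q, ∃ i ≤ p, M i q = t := by
  induction p with
  | zero =>
    intro t ht
    refine ⟨0, le_rfl, ?_⟩
    simp [M] at ht ⊢
    omega
  | succ p ih =>
    intro t ht
    rcases ht.eq_or_lt with rfl | ht
    · exact ⟨p + 1, by omega, rfl⟩
    · obtain ⟨i, hi, e⟩ := ih (by omega) t (by
        unfold M at ht ⊢; split_ifs at ht ⊢ <;> omega)
      exact ⟨i, by omega, e⟩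

lemma option_odd {p q t : ℕ} (hpq : p < q) (ht : t < M p q) : IsOption p q (2 * t + 1) := by
  have hp : 0 < p := by
    rcases Nat.eq_zero_or_pos p with rfl | hp
    · simp [M] at ht
    · exact hp
  obtain ⟨a, ha, e⟩ := exists_M_diag (p - 1) (q - 1) (by omega) t (by
    unfold M at ht ⊢; split_ifs at ht ⊢ <;> omega)
  refine ⟨a, by omega, a, by omega, ?_⟩
  have hne : p - 1 - a ≠ q - 1 - a := by omega
  simp only [G, if_true, if_neg hne, e]
  rw [Nat.xor_comm, two_mul_xor_one]

/-- Splitting off two off-diagonal positions yields twice the Nim-sum of their `M`-values. -/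
lemma option_of_M {p q : ℕ} (a b c d : ℕ) (hp : a + c + 1 = p) (hq : b + d + 1 = q)
    (hab : a ≠ b) (hcd : c ≠ d) : IsOption p q (2 * (M a b ^^^ M c d)) := by
  refine ⟨a, by omega, b, by omega, ?_⟩
  have h1 : p - 1 - a = c := by omega
  have h2 : q - 1 - b = d := by omega
  rw [h1, h2, G, G, if_neg hab, if_neg hcd, two_mul_xor_s9]

lemma M_zero_left (b : ℕ) : M 0 b = 0 := by simp [M]

lemma M_zero_right (a : ℕ) : M a 0 = 0 := by simp [M]

lemma option_even_s9 {p q t : ℕ} (hpq : p < q) (ht0 : 0 < t) (ht : t < M p q) :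
    IsOption p q (2 * t) := by
  have hp : 2 ≤ p := by
    unfold M at ht; split_ifs at ht <;> omega
  by_cases h1 : t ≤ M (p - 2) (q - 1)
  · obtain ⟨i, hi, e⟩ := exists_M_col (q - 1) (p - 2) (by omega) t h1
    have := option_of_M (p := p) (q := q) (p - 1 - i) 0 i (q - 1) (by omega) (by omega)
      (by omega) (by omega)
    rwa [M_zero_right, Nat.zero_xor, e] at this
  by_cases h2 : t = M (p - 1) (q - 2) ∧ p - 1 ≠ q - 2
  · have := option_of_M (p := p) (q := q) 0 1 (p - 1) (q - 2) (by omega) (by omega)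
      (by omega) h2.2
    rwa [M_zero_left, Nat.zero_xor, ← h2.1] at this
  -- Only `p + q = 5 k + 1` with `2 k ≤ p` and `t = 2 k - 1` is left.
  obtain ⟨k, hk, hkp, hkt⟩ : ∃ k, p + q = 5 * k + 1 ∧ 2 * k ≤ p ∧ t + 1 = 2 * k := by
    have hM := M_upper hpq.ne
    have h3 : ¬ (t ≤ p - 2 ∧ t ≤ q - 1 ∧ 5 * t + 2 ≤ 2 * (p - 2 + (q - 1))) :=
      fun ⟨x, y, z⟩ => h1 (M_lower x y z)
    have h4 : ¬ (t = p - 1 ∧ t < q - 2 ∧ 5 * t + 2 ≤ 2 * (p - 1 + (q - 2))) := by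
      rintro ⟨x, y, z⟩
      refine h2 ⟨?_, by omega⟩
      have := M_lower (p := p - 1) (q := q - 2) (m := t) (by omega) (by omega) z
      have := M_upper (a := p - 1) (b := q - 2) (by omega)
      omega
    exact ⟨(p + q) / 5, by omega, by omega, by omega⟩
  have hxor : 1 ^^^ (2 * (k - 1)) = t := by
    rw [Nat.xor_comm, two_mul_xor_one]; omega
  by_cases h3 : p = 2 * k
  · have := option_of_M (p := p) (q := q) 1 2 (p - 2) (q - 3) (by omega) (by omega)
      (by omega) (by omega)
    have e1 : M 1 2 = 1 := by simp [M]
    have e2 : M (p - 2) (q - 3) = 2 * (k - 1) := by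
      unfold M; split_ifs <;> omega
    rwa [e1, e2, hxor] at this
  · have := option_of_M (p := p) (q := q) 2 1 (p - 3) (q - 2) (by omega) (by omega)
      (by omega) (by omega)
    have e1 : M 2 1 = 1 := by simp [M]
    have e2 : M (p - 3) (q - 2) = 2 * (k - 1) := by
      unfold M; split_ifs <;> omega
    rwa [e1, e2, hxor] at this

lemma not_option_G {p q : ℕ} (h0 : p ≠ q → M p q ≠ 0) : ¬ IsOption p q (G p q) := by
  rintro ⟨a, ha, b, hb, e⟩
  obtain ⟨c, hc⟩ : ∃ c, c = p - 1 - a := ⟨_, rfl⟩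
  obtain ⟨d, hd⟩ : ∃ d, d = q - 1 - b := ⟨_, rfl⟩
  rw [← hc, ← hd] at e
  by_cases hab : a = b <;> by_cases hcd : c = d
  · have hpq : p = q := by omega
    simp [G, hab, hcd, hpq] at e
  · have hpq : p ≠ q := by omega
    rw [G, G, G, if_pos hab, if_neg hcd, if_neg hpq, Nat.xor_comm, two_mul_xor_one] at e
    omega
  · have hpq : p ≠ q := by omega
    rw [G, G, G, if_neg hab, if_pos hcd, if_neg hpq, two_mul_xor_one] at e
    omega
  · rw [G, G, if_neg hab, if_neg hcd, two_mul_xor_s9] at e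
    by_cases hpq : p = q
    · rw [G, if_pos hpq] at e
      omega
    · rw [G, if_neg hpq] at e
      have hne := h0 hpq
      have hle := xor_le_add' (M a b) (M c d)
      have e' : M a b ^^^ M c d = M p q := by omega
      -- The strict bound on the sum fails for two exceptional components; their Nim-sum is zero.
      by_cases hex : M a b = M c d
      · rw [hex, Nat.xor_self] at e'
        exact hne e'.symm
      · have : M a b + M c d < M p q := by
          rcases M_upper hab with ⟨x1, x2, x3, x4⟩ | ⟨x1, x2, x3⟩ <;>
            rcases M_upper hcd with ⟨y1, y2, y3, y4⟩ | ⟨y1, y2, y3⟩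
          · omega
          all_goals
            have := M_lower (p := p) (q := q) (m := M a b + M c d + 1)
              (by omega) (by omega) (by omega)
            omega
        omega

lemma mex_eq {S : Set ℕ} {n : ℕ} (h1 : n ∉ S) (h2 : ∀ t < n, t ∈ S) : mex S = n := by
  apply le_antisymm
  · exact Nat.sInf_le h1
  · apply le_csInf ⟨n, h1⟩
    intro m hm
    by_contra hlt
    exact hm (h2 m (by omega))

lemma f_eq_G (p q : ℕ) : f p q = G p q := by
  induction p using Nat.strong_induction_on generalizing q with
  | _ p ih =>
    have key : ∀ x, x ∈ ({h p ^^^ h q} ∪ ⋃ (p' : ℕ) (_ : p' < p) (q' : ℕ) (_ : q' < q),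
        {f p' q' ^^^ f (p - 1 - p') (q - 1 - q')} : Set ℕ) ↔
        x = h p ^^^ h q ∨ IsOption p q x := by
      intro x
      simp only [Set.mem_union, Set.mem_singleton_iff, Set.mem_iUnion, exists_prop, IsOption]
      refine or_congr_right (exists_congr fun a => and_congr_right fun ha =>
        exists_congr fun b => and_congr_right fun _ => ?_)
      rw [ih a ha, ih (p - 1 - a) (by omega), eq_comm]
    have hpos : ∀ n, 0 < n → h n = 1 := by
      intro n hn
      obtain ⟨m, rfl⟩ := Nat.exists_eq_succ_of_ne_zero hn.ne'
      rfl
    rw [f]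
    rcases eq_or_ne p q with rfl | hpq
    · apply mex_eq
      · rw [key, not_or]
        exact ⟨by simp [G], not_option_G (by simp)⟩
      · intro t ht
        rw [key]
        left
        simp [G] at ht
        simp [ht]
    by_cases hz : p = 0 ∨ q = 0
    · have hG : G p q = 0 := by
        rcases hz with rfl | rfl
        · simp [G, hpq, M_zero_left]
        · simp [G, hpq, M_zero_right]
      rw [hG]
      apply mex_eq
      · rw [key, not_or]
        constructor
        · rcases hz with rfl | rfl
          · rw [hpos q (by omega)]; decide
          · rw [hpos p (by omega)]; decide
        · rintro ⟨a, ha, b, hb, -⟩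
          omega
      · intro t ht
        omega
    · have hM : M p q ≠ 0 := by
        unfold M; split_ifs <;> omega
      have hh : h p ^^^ h q = 0 := by rw [hpos p (by omega), hpos q (by omega)]; rfl
      have hG : G p q = 2 * M p q := if_neg hpq
      apply mex_eq
      · rw [key, not_or]
        exact ⟨by omega, not_option_G fun _ => hM⟩
      · intro t ht
        rw [key, hh]
        rcases Nat.eq_zero_or_pos t with h0 | h0
        · exact Or.inl h0
        right
        rcases Nat.even_or_odd' t with ⟨s, rfl | rfl⟩
        · rcases lt_or_gt_of_ne hpq with hlt | hlt
          · exact option_even_s9 hlt (by omega) (by omega)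
          · exact (option_even_s9 hlt (by omega) (by rw [M_comm]; omega)).symm
        · rcases lt_or_gt_of_ne hpq with hlt | hlt
          · exact option_odd hlt (by omega)
          · exact (option_odd hlt (by rw [M_comm]; omega)).symm

theorem stmt9 (p q : ℕ) (hpq : p < q)
    (hq : (q : ℤ) < 2 * (p : ℤ) - |(p : ℤ) - 2| / 2)
    (l : ℕ) (hl : Even l) (hl1 : 2 ≤ l) (hl2 : l ≤ F p q - 2) :
    ∃ p' ≤ p - 1, ∃ q' ≤ q - 1,
      f p' q' ^^^ f (p - 1 - p') (q - 1 - q') = l := by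
  obtain ⟨t, rfl⟩ := hl.two_dvd
  have hF : F p q = 2 * (2 * (p + q - 1) / 5) := by
    clear hl2 hq
    obtain ⟨k, i, hi, hs⟩ : ∃ k i, i < 5 ∧ p + q = 5 * k + i :=
      ⟨(p + q) / 5, (p + q) % 5, by omega, by omega⟩
    unfold F idx
    rw [hs]
    interval_cases i <;> split_ifs <;> omega
  have hMF : M p q = 2 * (p + q - 1) / 5 := by
    unfold M
    rcases abs_cases ((p : ℤ) - 2) with ⟨e, _⟩ | ⟨e, _⟩ <;> rw [e] at hq <;> split_ifs <;> omega
  obtain ⟨a, ha, b, hb, e⟩ := option_even_s9 (t := t) hpq (by omega) (by omega)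
  exact ⟨a, by omega, b, by omega, by rw [f_eq_G, f_eq_G, e]⟩
end
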